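/- Linear growth bound: Let u: ℝⁿ → ℝ be a smooth entire solution of the self-shrinker equation. Then there exists C₁ > 0, depending only on n and sup_{|x|≤2√n} |u|, such that sup_{|x|≤R} |u(x)| ≤ C₁ R for all R > 1. One may take C₁ = 2(sup_{|x|≤2√n} |u| + √(2n+1)). -/

import Mathlib

open Real MeasureTheory Metric Filter
open scoped RealInnerProductSpace ENNReal NNReal

noncomputable section

abbrev E (n : ℕ) : Type := EuclideanSpace ℝ (Fin n)

variable {n : ℕ}

/-- `√(1 + |Du|²)`, the area element of the graph of `u`. -/
def aEl (u : E n → ℝ) (x : E n) : ℝ := Real.sqrt (1 + ‖gradient u x‖ ^ 2)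

/-- The vector field `Du/√(1+|Du|²)`. -/
def Vfield (u : E n → ℝ) (x : E n) : E n := (aEl u x)⁻¹ • gradient u x

/-- `div (Du/√(1+|Du|²))`. -/
def divV (u : E n → ℝ) (x : E n) : ℝ :=
  ∑ i, fderiv ℝ (fun y => Vfield u y i) x (EuclideanSpace.single i 1)

/-- The self-shrinker equation for an entire graph. -/
def ShrinkerEq (u : E n → ℝ) : Prop :=
  ∀ x, divV u x = (⟪x, gradient u x⟫ - u x) / (2 * aEl u x)

/-- The mean curvature of the graph of `u` with respect to the upward unit normal. -/
def meanCurv (u : E n → ℝ) (x : E n) : ℝ := -divV u x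

/-- The position vector `X = (x, u x)` of a point of the graph. -/
def Pos (u : E n → ℝ) (x : E n) : E (n + 1) :=
  (WithLp.equiv 2 (Fin (n + 1) → ℝ)).symm (Fin.snoc ((WithLp.equiv 2 (Fin n → ℝ)) x) (u x))

/-- The upward unit normal `n = (-Du, 1)/√(1+|Du|²)` at the point of the graph over `x`. -/
def NmlAt (u : E n → ℝ) (x : E n) : E (n + 1) :=
  (WithLp.equiv 2 (Fin (n + 1) → ℝ)).symm
    (Fin.snoc (fun i => -(Vfield u x i)) ((aEl u x)⁻¹))

/-- Projection of `ℝ^{n+1}` onto the first `n` coordinates. -/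
def projE (p : E (n + 1)) : E n :=
  (WithLp.equiv 2 (Fin n → ℝ)).symm fun i => p i.castSucc

/-- The unit normal of the graph, extended to `ℝ^{n+1}` independently of the last coordinate. -/
def Nml (u : E n → ℝ) (p : E (n + 1)) : E (n + 1) := NmlAt u (projE p)

/-- The inverse induced metric `g^{ij} = δ_{ij} - u_i u_j/(1+|Du|²)` of the graph. -/
def ginv (u : E n → ℝ) (x : E n) (i j : Fin n) : ℝ :=
  (if i = j then 1 else 0) - gradient u x i * gradient u x j / (aEl u x) ^ 2

/-- The Hessian `u_{ij}` of `u`. -/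
def hess (u : E n → ℝ) (x : E n) (i j : Fin n) : ℝ :=
  fderiv ℝ (fun y => gradient u y j) x (EuclideanSpace.single i 1)

/-- `|A|²`, the squared norm of the second fundamental form of the graph of `u`:
`|A|² = g^{ik} g^{jl} h_{ij} h_{kl}` with `h_{ij} = u_{ij}/√(1+|Du|²)`. -/
def A2 (u : E n → ℝ) (x : E n) : ℝ :=
  (∑ i, ∑ j, ∑ k, ∑ l, ginv u x i k * ginv u x j l * hess u x i j * hess u x k l) /
    (aEl u x) ^ 2

/-- Coordinate components `g^{ij} ∂_j f` of the tangential gradient. -/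
def gradCoord (u f : E n → ℝ) (x : E n) (i : Fin n) : ℝ :=
  ∑ j, ginv u x i j * gradient f x j

/-- The tangential gradient `∇_Σ f` (for `f` defined on the base, pulled back to the graph),
as a vector in `ℝ^{n+1}`. -/
def gradSigma (u f : E n → ℝ) (x : E n) : E (n + 1) :=
  (WithLp.equiv 2 (Fin (n + 1) → ℝ)).symm
    (Fin.snoc (fun i => gradCoord u f x i) (∑ i, gradient u x i * gradCoord u f x i))

/-- The Laplace–Beltrami operator of the graph:
`Δ_Σ f = (1/√g) ∂_i (√g g^{ij} ∂_j f)`. -/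
def lapSigma (u f : E n → ℝ) (x : E n) : ℝ :=
  (aEl u x)⁻¹ *
    ∑ i, fderiv ℝ (fun y => aEl u y * gradCoord u f y i) x (EuclideanSpace.single i 1)

/-- The tangential gradient `∇_Σ η` of an ambient function `η : ℝ^{n+1} → ℝ` along the graph:
the ambient gradient minus its normal component. -/
def gradSigmaAmb (u : E n → ℝ) (η : E (n + 1) → ℝ) (x : E n) : E (n + 1) :=
  gradient η (Pos u x) - ⟪gradient η (Pos u x), NmlAt u x⟫ • NmlAt u x

/-- `Vol(Σ ∩ B_R)`: the area of the part of the graph inside the ball of radius `R`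
in `ℝ^{n+1}`, computed by the area formula. -/
def sVol (u : E n → ℝ) (R : ℝ) : ℝ := ∫ x in {x : E n | ‖Pos u x‖ ≤ R}, aEl u x

/-- `M_R = sup_{|x| ≤ R} |u|`. -/
def supBall (u : E n → ℝ) (R : ℝ) : ℝ := ⨆ x : Metric.closedBall (0 : E n) R, |u x.1|

end

/-- Second-order necessary condition for a local minimum on the line. -/
theorem deriv_deriv_nonneg_of_isLocalMin {f : ℝ → ℝ} {a : ℝ} (hf : ContinuousAt f a)
    (h : IsLocalMin f a) : 0 ≤ deriv (deriv f) a := by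
  by_contra! hneg
  have hmax : IsLocalMax f a := isLocalMax_of_deriv_deriv_neg hneg h.deriv_eq_zero hf
  have hconst : f =ᶠ[nhds a] fun _ => f a := by
    filter_upwards [h, hmax] with x hx hx' using le_antisymm hx' hx
  have hzero : deriv (deriv f) a = 0 := by
    rw [hconst.deriv.deriv_eq]
    simp
  exact hneg.ne hzero

theorem inner_gradient_eq_fderiv {n : ℕ} (u : E n → ℝ) (x v : E n) :
    ⟪gradient u x, v⟫ = fderiv ℝ u x v := by
  simp [gradient]

theorem gradient_apply_eq_fderiv {n : ℕ} (u : E n → ℝ) (x : E n) (i : Fin n) :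
    gradient u x i = fderiv ℝ u x (EuclideanSpace.single i 1) := by
  rw [← inner_gradient_eq_fderiv, EuclideanSpace.inner_single_right]
  simp

theorem sum_smul_single {n : ℕ} (v : E n) : ∑ i, v i • EuclideanSpace.single i (1 : ℝ) = v := by
  simpa using (EuclideanSpace.basisFun (Fin n) ℝ).sum_repr v

/-- A positive semidefinite bilinear form evaluated at a vector of length at most one is bounded
by its trace. -/
theorem apply_self_le_trace {n : ℕ} (B : E n →L[ℝ] E n →L[ℝ] ℝ) (hB : ∀ v, 0 ≤ B v v)
    {ν : E n} (hν : ‖ν‖ ≤ 1) :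
    B ν ν ≤ ∑ i, B (EuclideanSpace.single i 1) (EuclideanSpace.single i 1) := by
  have hnonneg : 0 ≤ ∑ i, B (EuclideanSpace.single i 1 - ν i • ν)
      (EuclideanSpace.single i 1 - ν i • ν) := Finset.sum_nonneg fun i _ => hB _
  have hleft : ∑ i, ν i * B (EuclideanSpace.single i 1) ν = B ν ν := by
    conv_rhs => enter [1]; rw [← sum_smul_single ν]
    simp [map_sum]
  have hright : ∑ i, ν i * B ν (EuclideanSpace.single i 1) = B ν ν := by
    conv_rhs => enter [2]; rw [← sum_smul_single ν]
    simp [map_sum]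
  have hnorm : ∑ i, ν i * ν i = ‖ν‖ ^ 2 := by
    rw [EuclideanSpace.real_norm_sq_eq]
    simp [sq]
  have hexpand : ∑ i, B (EuclideanSpace.single i 1 - ν i • ν)
      (EuclideanSpace.single i 1 - ν i • ν) =
      ∑ i, B (EuclideanSpace.single i 1) (EuclideanSpace.single i 1) - 2 * B ν ν
        + ‖ν‖ ^ 2 * B ν ν := by
    have hterm : ∀ i, B (EuclideanSpace.single i 1 - ν i • ν)
        (EuclideanSpace.single i 1 - ν i • ν) =
        B (EuclideanSpace.single i 1) (EuclideanSpace.single i 1)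
          - ν i * B (EuclideanSpace.single i 1) ν - ν i * B ν (EuclideanSpace.single i 1)
          + ν i * ν i * B ν ν := by
      intro i
      simp only [map_sub, map_smul, sub_apply, smul_apply, smul_eq_mul]
      ring
    simp only [hterm, Finset.sum_add_distrib, Finset.sum_sub_distrib, hleft, hright,
      ← Finset.sum_mul, hnorm]
    ring
  nlinarith [hB ν, norm_nonneg ν, mul_le_mul_of_nonneg_right (pow_le_one₀ (n := 2)
    (norm_nonneg ν) hν) (hB ν)]

theorem aEl_sq {n : ℕ} (u : E n → ℝ) (x : E n) : aEl u x ^ 2 = 1 + ‖gradient u x‖ ^ 2 :=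
  Real.sq_sqrt (by positivity)

theorem aEl_pos {n : ℕ} (u : E n → ℝ) (x : E n) : 0 < aEl u x :=
  Real.sqrt_pos.2 (by positivity)

/-- The divergence-form operator in nondivergence form. -/
theorem aEl_mul_divV {n : ℕ} {u : E n → ℝ} (hu : ContDiff ℝ 2 u) (x : E n) :
    aEl u x * divV u x =
      ∑ i, fderiv ℝ (fderiv ℝ u) x (EuclideanSpace.single i 1) (EuclideanSpace.single i 1)
        - fderiv ℝ (fderiv ℝ u) x (gradient u x) (gradient u x) / aEl u x ^ 2 := by
  set B := fderiv ℝ (fderiv ℝ u) x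
  set p := gradient u x with hp
  have hW := aEl_pos u x
  have hDu : HasFDerivAt (fderiv ℝ u) B x :=
    ((hu.fderiv_right (m := 1) (by norm_num)).differentiable one_ne_zero x).hasFDerivAt
  have hcoord : ∀ j, HasFDerivAt (fun y => gradient u y j)
      (B.flip (EuclideanSpace.single j 1)) x := by
    intro j
    simp only [gradient_apply_eq_fderiv]
    exact (hDu.clm_apply (hasFDerivAt_const (EuclideanSpace.single j (1 : ℝ)) x)).congr_fderiv
      (by ext v; simp)
  have hsq : HasFDerivAt (fun y => 1 + ‖gradient u y‖ ^ 2) ((2 : ℝ) • B.flip p) x := by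
    have hsum : HasFDerivAt (fun y => 1 + ∑ j, gradient u y j ^ 2)
        (∑ j, (2 * gradient u x j ^ 1) • B.flip (EuclideanSpace.single j 1)) x :=
      (HasFDerivAt.fun_sum fun j _ => by simpa using (hcoord j).pow 2).const_add 1
    simp only [EuclideanSpace.real_norm_sq_eq]
    refine hsum.congr_fderiv ?_
    conv_rhs => rw [← sum_smul_single p]
    simp [map_sum, Finset.smul_sum, smul_smul, hp]
  have hinv : HasFDerivAt (fun y => (aEl u y)⁻¹) (-(aEl u x ^ 3)⁻¹ • B.flip p) x := by
    have h1 : HasFDerivAt (aEl u) _ x := hsq.sqrt (by positivity)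
    have h2 := (hasDerivAt_inv hW.ne').comp_hasFDerivAt x h1
    refine h2.congr_fderiv ?_
    rw [smul_smul, smul_smul]
    congr 1
    change -(aEl u x ^ 2)⁻¹ * (1 / (2 * aEl u x)) * 2 = _
    field_simp
  have hcomp : ∀ i, fderiv ℝ (fun y => Vfield u y i) x (EuclideanSpace.single i 1) =
      (aEl u x)⁻¹ * B (EuclideanSpace.single i 1) (EuclideanSpace.single i 1)
        - (aEl u x ^ 3)⁻¹ * (p i * B (EuclideanSpace.single i 1) p) := by
    intro i
    have h : HasFDerivAt (fun y => Vfield u y i) _ x := hinv.mul (hcoord i)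
    rw [h.fderiv]
    simp [← hp]
    ring
  have hBp : ∑ i, p i * B (EuclideanSpace.single i 1) p = B p p := by
    conv_rhs => enter [1]; rw [← sum_smul_single p]
    simp [map_sum]
  rw [divV]
  simp only [hcomp, Finset.sum_sub_distrib, ← Finset.mul_sum, hBp]
  field_simp

/-- First- and second-order conditions at a point of the graph closest to a point on the
vertical axis. -/
theorem isLocalMin_dist_sq_graph {n : ℕ} {u : E n → ℝ} (hu : ContDiff ℝ 2 u) {k : ℝ} {y : E n}
    (hmin : IsLocalMin (fun z => ‖z‖ ^ 2 + (u z - k) ^ 2) y) (v : E n) :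
    ⟪y, v⟫ + (u y - k) * fderiv ℝ u y v = 0 ∧
      0 ≤ ‖v‖ ^ 2 + fderiv ℝ u y v ^ 2 + (u y - k) * fderiv ℝ (fderiv ℝ u) y v v := by
  set f : ℝ → ℝ := fun s => ‖y + s • v‖ ^ 2 + (u (y + s • v) - k) ^ 2 with hf
  have hline : ∀ s : ℝ, HasDerivAt (fun s : ℝ => y + s • v) v s := fun s => by
    simpa using ((hasDerivAt_id s).smul_const v).const_add y
  have hu1 : ∀ s, HasDerivAt (fun s : ℝ => u (y + s • v)) (fderiv ℝ u (y + s • v) v) s :=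
    fun s => ((hu.differentiable two_ne_zero _).hasFDerivAt).comp_hasDerivAt s (hline s)
  have hu2 : HasDerivAt (fun s : ℝ => fderiv ℝ u (y + s • v) v)
      (fderiv ℝ (fderiv ℝ u) (y + (0 : ℝ) • v) v v) 0 := by
    have h := (((hu.fderiv_right (m := 1) (by norm_num)).differentiable one_ne_zero
      _).hasFDerivAt).comp_hasDerivAt (0 : ℝ) (hline 0)
    simpa using h.clm_apply (hasDerivAt_const (0 : ℝ) v)
  have hf1 : ∀ s, HasDerivAt f (2 * ⟪y + s • v, v⟫
      + 2 * ((u (y + s • v) - k) * fderiv ℝ u (y + s • v) v)) s := fun s => by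
    refine ((hline s).norm_sq.add (((hu1 s).sub_const k).pow 2)).congr_deriv ?_
    push_cast
    ring
  have hf2 : HasDerivAt (deriv f) (2 * ‖v‖ ^ 2
      + 2 * (fderiv ℝ u y v ^ 2 + (u y - k) * fderiv ℝ (fderiv ℝ u) y v v)) 0 := by
    rw [funext fun s => (hf1 s).deriv]
    have h1 : HasDerivAt (fun s : ℝ => ⟪y + s • v, v⟫) (‖v‖ ^ 2) 0 := by
      simpa using (hline 0).inner ℝ (hasDerivAt_const (0 : ℝ) v)
    refine ((h1.const_mul 2).add ((((hu1 0).sub_const k).mul hu2).const_mul 2)).congr_deriv ?_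
    simp [sq]
  have hloc : IsLocalMin f 0 := by
    have hcont : ContinuousAt (fun s : ℝ => y + s • v) 0 := (hline 0).continuousAt
    have h0 : Tendsto (fun s : ℝ => y + s • v) (nhds 0) (nhds y) := by
      simpa [ContinuousAt] using hcont
    filter_upwards [h0.eventually hmin] with s hs
    simpa [hf] using hs
  have hfirst := hloc.hasDerivAt_eq_zero (hf1 0)
  have hsecond := deriv_deriv_nonneg_of_isLocalMin (hf1 0).continuousAt hloc
  rw [hf2.deriv] at hsecond
  simp only [zero_smul, add_zero] at hfirst
  constructor <;> linarith

/-- The maximum principle for a shrinker: where the squared distance to the point `(0, k)` has a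
local minimum on the graph, the position `X` satisfies `⟪X, X - (0, k)⟫ ≤ 2 n`. -/
theorem ShrinkerEq.norm_sq_add_le_of_isLocalMin {n : ℕ} {u : E n → ℝ} (hshr : ShrinkerEq u)
    (hu : ContDiff ℝ 2 u) {k : ℝ} {y : E n}
    (hmin : IsLocalMin (fun z => ‖z‖ ^ 2 + (u z - k) ^ 2) y) :
    ‖y‖ ^ 2 + (u y - k) * u y ≤ 2 * n := by
  set p := gradient u y with hp
  set B := fderiv ℝ (fderiv ℝ u) y
  have hW := aEl_pos u y
  have hWsq : aEl u y ^ 2 = 1 + ‖p‖ ^ 2 := aEl_sq u y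
  set W := aEl u y
  have hcrit : ‖y‖ ^ 2 + (u y - k) * ⟪y, p⟫ = 0 := by
    rw [real_inner_comm, inner_gradient_eq_fderiv]
    simpa using (isLocalMin_dist_sq_graph hu hmin y).1
  let Q : E n →L[ℝ] E n →L[ℝ] ℝ :=
    isBoundedBilinearMap_inner.toContinuousLinearMap + (fderiv ℝ u y).smulRight (fderiv ℝ u y)
      + (u y - k) • B
  have hQ : ∀ v, Q v v = ‖v‖ ^ 2 + ⟪p, v⟫ ^ 2 + (u y - k) * B v v := fun v => by
    rw [inner_gradient_eq_fderiv]
    simp [Q, sq]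
  have hQnonneg : ∀ v, 0 ≤ Q v v := fun v => by
    rw [hQ, inner_gradient_eq_fderiv]
    exact (isLocalMin_dist_sq_graph hu hmin v).2
  have hν : ‖W⁻¹ • p‖ ≤ 1 := by
    rw [norm_smul, norm_inv, Real.norm_of_nonneg hW.le, inv_mul_le_one₀ hW]
    nlinarith [norm_nonneg p]
  have htrace := apply_self_le_trace Q hQnonneg hν
  have hQν : Q (W⁻¹ • p) (W⁻¹ • p) = ‖p‖ ^ 2 + (u y - k) * (B p p / W ^ 2) := by
    rw [hQ, norm_smul, inner_smul_right, norm_inv, Real.norm_of_nonneg hW.le,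
      real_inner_self_eq_norm_sq]
    simp only [map_smul, smul_apply, smul_eq_mul]
    field_simp
    rw [hWsq]
    ring
  have hQtrace : ∑ i, Q (EuclideanSpace.single i 1) (EuclideanSpace.single i 1) =
      n + ‖p‖ ^ 2 + (u y - k) *
        ∑ i, B (EuclideanSpace.single i 1) (EuclideanSpace.single i 1) := by
    simp only [hQ, Finset.sum_add_distrib, ← Finset.mul_sum]
    simp [EuclideanSpace.real_norm_sq_eq p, EuclideanSpace.inner_single_right]
  have hdiv := aEl_mul_divV hu y
  rw [hshr y] at hdiv
  have hop : ∑ i, B (EuclideanSpace.single i 1) (EuclideanSpace.single i 1) - B p p / W ^ 2 =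
      (⟪y, p⟫ - u y) / 2 := by
    rw [← hdiv]
    change W * ((⟪y, p⟫ - u y) / (2 * W)) = _
    field_simp
  rw [hQν, hQtrace] at htrace
  have hkey : 0 ≤ n + (u y - k) * ((⟪y, p⟫ - u y) / 2) := by
    rw [← hop]
    linarith
  linarith

theorem ShrinkerEq.neg {n : ℕ} {u : E n → ℝ} (hshr : ShrinkerEq u) :
    ShrinkerEq fun x => -u x := by
  have hgrad : ∀ x, gradient (fun x => -u x) x = -gradient u x := fun x => by
    simp [gradient, fderiv_fun_neg]
  have hael : ∀ x, aEl (fun x => -u x) x = aEl u x := fun x => by simp [aEl, hgrad]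
  intro x
  have hdiv : divV (fun x => -u x) x = -divV u x := by
    simp [divV, Vfield, hgrad, hael, fderiv_fun_neg]
  rw [hdiv, hshr x, hgrad, hael, inner_neg_right]
  ring

theorem abs_le_supBall {n : ℕ} {u : E n → ℝ} (hu : Continuous u) {r : ℝ} {x : E n}
    (hx : ‖x‖ ≤ r) : |u x| ≤ supBall u r := by
  have hbdd : BddAbove (Set.range fun z : Metric.closedBall (0 : E n) r => |u z.1|) := by
    have := (isCompact_closedBall (0 : E n) r).bddAbove_image hu.abs.continuousOn
    rwa [Set.image_eq_range] at this
  exact le_ciSup hbdd ⟨x, by simpa using hx⟩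

/-- Comparison of a shrinking graph with a shrinking sphere: the rescalings `λ ↦ λ u(·/λ)`,
`1 ≤ λ ≤ Λ`, stay away from a sphere of initial radius `ρ` centred at height `h` which shrinks
faster than by mean curvature, if they do so initially. -/
theorem ShrinkerEq.sphere_avoidance {n : ℕ} {u : E n → ℝ} (hshr : ShrinkerEq u)
    (hu : ContDiff ℝ 2 u) {m h ρ Λ : ℝ} (hm : (n : ℝ) < m) (hρ : 0 ≤ ρ)
    (hinit : ∀ y, ρ ^ 2 < Λ ^ 2 * ‖y‖ ^ 2 + (Λ * u y - h) ^ 2) {l : ℝ} (hl : l ∈ Set.Icc 1 Λ)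
    (y : E n) :
    ρ ^ 2 < l ^ 2 * ‖y‖ ^ 2 + (l * u y - h) ^ 2 + 2 * m * (Λ ^ 2 - l ^ 2) := by
  by_contra! hle
  have hm0 : 0 ≤ m := (Nat.cast_nonneg n).trans hm.le
  set G : E n × ℝ → ℝ := fun z =>
    z.2 ^ 2 * ‖z.1‖ ^ 2 + (z.2 * u z.1 - h) ^ 2 + 2 * m * (Λ ^ 2 - z.2 ^ 2) with hG
  have hGcont : Continuous G := by
    have := hu.continuous
    fun_prop
  have hnorm : ∀ z : E n, ∀ s ∈ Set.Icc 1 Λ, G (z, s) ≤ ρ ^ 2 → ‖z‖ ≤ ρ := by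
    intro z s hs hz
    have h1 : 0 ≤ 2 * m * (Λ ^ 2 - s ^ 2) := by
      have : s ^ 2 ≤ Λ ^ 2 := pow_le_pow_left₀ (by linarith [hs.1]) hs.2 2
      exact mul_nonneg (by linarith) (by linarith)
    have h2 : 1 * ‖z‖ ^ 2 ≤ s ^ 2 * ‖z‖ ^ 2 := by
      gcongr
      exact one_le_pow₀ hs.1
    refine le_of_sq_le_sq ?_ hρ
    simp only [hG] at hz
    nlinarith [sq_nonneg (s * u z - h)]
  have hK : IsCompact (Metric.closedBall (0 : E n) (ρ + 1) ×ˢ Set.Icc 1 Λ) :=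
    (isCompact_closedBall _ _).prod isCompact_Icc
  have hmem : (y, l) ∈ Metric.closedBall (0 : E n) (ρ + 1) ×ˢ Set.Icc 1 Λ :=
    ⟨by simpa using (hnorm y l hl hle).trans (by linarith), hl⟩
  obtain ⟨⟨z, s⟩, ⟨-, hs⟩, hmin⟩ := hK.exists_isMinOn ⟨_, hmem⟩ hGcont.continuousOn
  simp only at hs
  have hzle : G (z, s) ≤ ρ ^ 2 := (hmin hmem).trans hle
  have hzρ := hnorm z s hs hzle
  have hs0 : 0 < s := by linarith [hs.1]
  have hsΛ : s < Λ := by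
    refine hs.2.lt_of_ne fun heq => (hinit z).not_ge ?_
    simpa [hG, heq] using hzle
  have hspace : IsLocalMin (fun x => ‖x‖ ^ 2 + (u x - h / s) ^ 2) z := by
    have hball : Metric.closedBall (0 : E n) (ρ + 1) ∈ nhds z :=
      Filter.mem_of_superset (Metric.isOpen_ball.mem_nhds (by simp; linarith))
        Metric.ball_subset_closedBall
    filter_upwards [hball] with x hx
    have hx' : G (z, s) ≤ G (x, s) := hmin (show (x, s) ∈ _ from ⟨hx, hs⟩)
    have hscale : ∀ x, G (x, s) =
        s ^ 2 * (‖x‖ ^ 2 + (u x - h / s) ^ 2) + 2 * m * (Λ ^ 2 - s ^ 2) := fun x => by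
      simp only [hG]
      field_simp
    rw [hscale, hscale] at hx'
    exact le_of_mul_le_mul_left (by linarith) (pow_pos hs0 2)
  have hell := hshr.norm_sq_add_le_of_isLocalMin hu hspace
  have htime : h * u z ≤ s * (‖z‖ ^ 2 + u z ^ 2 - 2 * m) := by
    set P := ‖z‖ ^ 2 + u z ^ 2 - 2 * m with hP
    have hquot : ∀ t ∈ Set.Ioc s Λ, 2 * (h * u z) ≤ (t + s) * P := by
      intro t ht
      have ht' : G (z, s) ≤ G (z, t) :=
        hmin (show (z, t) ∈ _ from
          ⟨by simpa using hzρ.trans (by linarith), hs.1.trans ht.1.le, ht.2⟩)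
      have hdiff : G (z, t) - G (z, s) = (t - s) * ((t + s) * P - 2 * (h * u z)) := by
        simp only [hG, hP]
        ring
      have := nonneg_of_mul_nonneg_right (hdiff ▸ sub_nonneg.2 ht') (sub_pos.2 ht.1)
      linarith
    have hlim : Tendsto (fun t => (t + s) * P) (nhdsWithin s (Set.Ioi s)) (nhds ((s + s) * P)) :=
      (Continuous.tendsto (by fun_prop) s).mono_left nhdsWithin_le_nhds
    have := ge_of_tendsto hlim (Filter.mem_of_superset (Ioc_mem_nhdsGT hsΛ) hquot)
    linarith
  have : s * (‖z‖ ^ 2 + (u z - h / s) * u z) ≤ s * (2 * n) := by gcongr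
  have hrw : s * (‖z‖ ^ 2 + (u z - h / s) * u z) = s * (‖z‖ ^ 2 + u z ^ 2) - h * u z := by
    field_simp
    ring
  nlinarith

theorem ShrinkerEq.le_linear {n : ℕ} (hn : 1 ≤ n) {u : E n → ℝ} (hshr : ShrinkerEq u)
    (hu : ContDiff ℝ 2 u) {R : ℝ} (hR : 1 < R) {x : E n} (hx : ‖x‖ ≤ R) :
    u x ≤ 2 * (supBall u (2 * √n) + √(2 * n + 1)) * R := by
  by_contra! hlt
  have hn' : (1 : ℝ) ≤ n := by exact_mod_cast hn
  have hM0 : 0 ≤ supBall u (2 * √n) := Real.iSup_nonneg fun _ => abs_nonneg _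
  set M := supBall u (2 * √n)
  set h := 2 * (M + √(2 * n + 1)) * R with hh
  set Λ := √(R ^ 2 + 1) with hΛ
  set ρ := √(2 * n + 2) * R with hρdef
  have hΛsq : Λ ^ 2 = R ^ 2 + 1 := Real.sq_sqrt (by positivity)
  have hρsq : ρ ^ 2 = (2 * n + 2) * R ^ 2 := by
    rw [hρdef, mul_pow, Real.sq_sqrt (by positivity)]
  have hρ0 : 0 ≤ ρ := by positivity
  have hΛ1 : 1 < Λ := by
    rw [hΛ, Real.lt_sqrt zero_le_one]
    nlinarith
  have hΛR : Λ ≤ 2 * R := Real.sqrt_le_iff.2 ⟨by linarith, by nlinarith⟩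
  have hsq4 : (2 * √n) ^ 2 = 4 * n := by
    rw [mul_pow, Real.sq_sqrt (by positivity)]
    norm_num
  have hgap : Λ * M + ρ < h := by
    have h1 : √(2 * n + 2 : ℝ) < 2 * √(2 * n + 1) := by
      rw [Real.sqrt_lt' (by positivity), mul_pow, Real.sq_sqrt (by positivity)]
      linarith
    have h2 : ρ < 2 * √(2 * n + 1) * R := mul_lt_mul_of_pos_right h1 (by linarith)
    nlinarith [mul_le_mul_of_nonneg_right hΛR hM0]
  have hinit : ∀ y : E n, ρ ^ 2 < Λ ^ 2 * ‖y‖ ^ 2 + (Λ * u y - h) ^ 2 := by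
    intro y
    by_cases hy : ‖y‖ ≤ 2 * √n
    · have huy : u y ≤ M := (le_abs_self _).trans (abs_le_supBall hu.continuous hy)
      have hgap' : ρ < h - Λ * u y := by
        nlinarith [mul_le_mul_of_nonneg_left huy (by linarith : 0 ≤ Λ)]
      nlinarith [mul_nonneg (sq_nonneg Λ) (sq_nonneg ‖y‖)]
    · have hy2 : 4 * (n : ℝ) < ‖y‖ ^ 2 := by
        rw [← hsq4]
        exact pow_lt_pow_left₀ (not_le.1 hy) (by positivity) two_ne_zero
      rw [hρsq, hΛsq]
      nlinarith [sq_nonneg (Λ * u y - h), mul_lt_mul_of_pos_left hy2 (by positivity : 0 < R ^ 2 + 1),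
        mul_le_mul_of_nonneg_right hn' (sq_nonneg R)]
  have hcont : ContinuousOn (fun l : ℝ => l * u (l⁻¹ • x)) (Set.Icc 1 Λ) := by
    have hinv : ContinuousOn (fun l : ℝ => l⁻¹) (Set.Icc 1 Λ) :=
      continuousOn_inv₀.mono fun l hl => (by linarith [hl.1] : (0 : ℝ) < l).ne'
    exact continuousOn_id.mul
      (hu.continuous.comp_continuousOn (hinv.smul continuousOn_const))
  have hend : Λ * u (Λ⁻¹ • x) ≤ h := by
    have hRΛ : R ≤ Λ := Real.le_sqrt_of_sq_le (by linarith)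
    have hsmall : ‖Λ⁻¹ • x‖ ≤ 2 * √n := by
      rw [norm_smul, norm_inv, Real.norm_of_nonneg (by linarith)]
      have : Λ⁻¹ * ‖x‖ ≤ 1 := (inv_mul_le_one₀ (by linarith)).2 (hx.trans hRΛ)
      linarith [Real.one_le_sqrt.2 hn']
    have := mul_le_mul_of_nonneg_left
      ((le_abs_self _).trans (abs_le_supBall hu.continuous hsmall)) (by linarith : 0 ≤ Λ)
    linarith
  obtain ⟨l, hl, hlh⟩ := intermediate_value_Icc' hΛ1.le hcont
    (show h ∈ Set.Icc _ _ from ⟨hend, by simpa using hlt.le⟩)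
  have hl0 : 0 < l := by linarith [hl.1]
  have havoid := hshr.sphere_avoidance hu (m := n + 1 / 2) (by linarith) hρ0 hinit hl (l⁻¹ • x)
  simp only at hlh
  rw [hlh, norm_smul, norm_inv, Real.norm_of_nonneg hl0.le, hρsq, hΛsq, mul_pow, inv_pow,
    mul_inv_cancel_left₀ (by positivity)] at havoid
  have hx2 : ‖x‖ ^ 2 ≤ R ^ 2 := pow_le_pow_left₀ (norm_nonneg x) hx 2
  nlinarith [one_le_pow₀ hl.1 (n := 2), mul_le_mul_of_nonneg_left (one_le_pow₀ hl.1 (n := 2))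
    (by linarith : 0 ≤ 2 * (n : ℝ) + 1)]

/-- linear growth bound: `sup_{|x|≤R} |u| ≤ C₁ R` for all `R > 1`,
with `C₁ = 2(sup_{|x|≤2√n}|u| + √(2n+1))`. -/
theorem stmt_10 (n : ℕ) (u : E n → ℝ) (hu : ContDiff ℝ (⊤ : ℕ∞) u) (hshr : ShrinkerEq u) :
    ∃ C₁ : ℝ, C₁ = 2 * (supBall u (2 * Real.sqrt n) + Real.sqrt (2 * n + 1)) ∧
      0 < C₁ ∧ ∀ R > (1 : ℝ), ∀ x : E n, ‖x‖ ≤ R → |u x| ≤ C₁ * R := by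
  have hM0 : 0 ≤ supBall u (2 * √n) := Real.iSup_nonneg fun _ => abs_nonneg _
  have hC : 0 < 2 * (supBall u (2 * √n) + √(2 * n + 1)) := by positivity
  refine ⟨_, rfl, hC, fun R hR x hx => ?_⟩
  have hu2 : ContDiff ℝ 2 u := hu.of_le (WithTop.coe_le_coe.2 (le_top : (2 : ℕ∞) ≤ ⊤))
  rcases Nat.eq_zero_or_pos n with rfl | hn
  · have hzero : ‖x‖ ≤ 2 * √((0 : ℕ) : ℝ) := by simp [Subsingleton.elim x 0]
    have hle := abs_le_supBall hu.continuous hzero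
    nlinarith [Real.sqrt_nonneg (2 * ((0 : ℕ) : ℝ) + 1)]
  · refine abs_le.2 ⟨?_, hshr.le_linear hn hu2 hR hx⟩
    have hneg := hshr.neg.le_linear hn hu2.neg hR hx
    have hsup : supBall (fun x => -u x) (2 * √n) = supBall u (2 * √n) := by simp [supBall]
    rw [hsup] at hneg
    linarith
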